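/- The traces of the matrices representing the conjugacy-class representatives of the binary icosahedral group under σ₁ are as follows: tr(I) = 2, tr(A₁) = −e₅ − e₅⁴, tr(A₁²) = e₅² + e₅³, tr(A₁³) = −e₅² − e₅³, tr(A₁⁴) = e₅ + e₅⁴, tr(A₁⁵) = −2, tr(A₁B₁) = 0, tr(B₁) = 1, and tr(B₁²) = −1. -/

import Mathlib

noncomputable section

/-- `e₅ = exp(2πi/5)`. -/
def e5 : ℂ := Complex.exp (2 * Real.pi * Complex.I / 5)

/-- The matrix `A₁`, image of the generator `r` under the representation `σ₁`. -/
def A1 : Matrix (Fin 2) (Fin 2) ℂ :=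
  (1/5 : ℂ) • !![-3*e5 - e5^2 + e5^3 - 2*e5^4, e5 - 3*e5^2 - 2*e5^3 - e5^4;
                 e5 + 2*e5^2 + 3*e5^3 - e5^4, -2*e5 + e5^2 - e5^3 - 3*e5^4]

/-- The matrix `B₁`, image of the generator `s` under the representation `σ₁`. -/
def B1 : Matrix (Fin 2) (Fin 2) ℂ :=
  (1/5 : ℂ) • !![-e5 - 2*e5^2 - 3*e5^3 - 4*e5^4, 2*e5 - e5^2 + e5^3 - 2*e5^4;
                 2*e5 - e5^2 + e5^3 - 2*e5^4, -4*e5 - 3*e5^2 - 2*e5^3 - e5^4]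

/-!
`A₁` and `B₁` have determinant `1`, so by Cayley–Hamilton the traces of their powers are governed by
their traces alone. As `tr A₁ = -e₅ - e₅⁴` and `(-e₅)(-e₅⁴) = 1`, the eigenvalues of `A₁` are `-e₅`
and `-e₅⁴`, whence `tr A₁ⁿ = (-e₅)ⁿ + (-e₅⁴)ⁿ`.
-/

section TwoByTwo

variable {R : Type*} [CommRing R] (M : Matrix (Fin 2) (Fin 2) R)

theorem sq_fin_two_eq_trace_smul_sub_det_smul_one : M ^ 2 = M.trace • M - M.det • 1 := by
  nontriviality R
  have cayley_hamilton := M.aeval_self_charpoly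
  simp only [Matrix.charpoly_fin_two, map_add, map_sub, map_mul, map_pow, Polynomial.aeval_X,
    Polynomial.aeval_C, Algebra.algebraMap_eq_smul_one, smul_one_mul] at cayley_hamilton
  rwa [sub_add, sub_eq_zero] at cayley_hamilton

theorem trace_pow_add_two_fin_two (n : ℕ) :
    (M ^ (n + 2)).trace = M.trace * (M ^ (n + 1)).trace - M.det * (M ^ n).trace := by
  rw [pow_add, sq_fin_two_eq_trace_smul_sub_det_smul_one, mul_sub, mul_smul_comm, mul_smul_comm,
    ← pow_succ, mul_one, Matrix.trace_sub, Matrix.trace_smul, Matrix.trace_smul, smul_eq_mul,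
    smul_eq_mul]

variable {M}

theorem trace_pow_fin_two_eq_pow_add_pow {a b : R} (htrace : M.trace = a + b)
    (hdet : M.det = a * b) (n : ℕ) : (M ^ n).trace = a ^ n + b ^ n := by
  induction n using Nat.twoStepInduction with
  | zero => simp [one_add_one_eq_two]
  | one => simpa using htrace
  | more n ih ih' =>
    rw [trace_pow_add_two_fin_two, ih', ih, htrace, hdet]
    ring

end TwoByTwo

theorem isPrimitiveRoot_e5 : IsPrimitiveRoot e5 5 := by
  simpa only [e5, Nat.cast_ofNat] using Complex.isPrimitiveRoot_exp 5 (by norm_num)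

theorem e5_pow_five : e5 ^ 5 = 1 :=
  isPrimitiveRoot_e5.pow_eq_one

theorem e5_geom_sum : 1 + e5 + e5 ^ 2 + e5 ^ 3 + e5 ^ 4 = 0 := by
  simpa [Finset.sum_range_succ] using isPrimitiveRoot_e5.geom_sum_eq_zero (by norm_num)

theorem trace_A1 : A1.trace = -e5 - e5 ^ 4 := by
  rw [A1, Matrix.trace_smul, Matrix.trace_fin_two_of, smul_eq_mul]
  ring

theorem det_A1 : A1.det = 1 := by
  rw [A1, Matrix.det_smul, Matrix.det_fin_two_of, Fintype.card_fin]
  -- The cofactor is the quotient of `det A₁ - 1` by the fifth cyclotomic polynomial in `e₅`.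
  linear_combination (-1 + e5 + e5 ^ 2 / 5 - e5 ^ 3 / 5 + e5 ^ 4 / 5) * e5_geom_sum

theorem trace_A1_pow (n : ℕ) : (A1 ^ n).trace = (-e5) ^ n + (-e5 ^ 4) ^ n := by
  apply trace_pow_fin_two_eq_pow_add_pow
  · rw [trace_A1, sub_eq_add_neg]
  · linear_combination det_A1 - e5_pow_five

theorem trace_B1 : B1.trace = 1 := by
  rw [B1, Matrix.trace_smul, Matrix.trace_fin_two_of, smul_eq_mul]
  linear_combination -e5_geom_sum

theorem det_B1 : B1.det = 1 := by
  rw [B1, Matrix.det_smul, Matrix.det_fin_two_of, Fintype.card_fin]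
  linear_combination (-1 + e5 + 3 / 5 * e5 ^ 3) * e5_geom_sum

theorem trace_B1_sq : (B1 ^ 2).trace = -1 := by
  rw [trace_pow_add_two_fin_two, zero_add, pow_one, pow_zero, trace_B1, det_B1, Matrix.trace_one,
    Fintype.card_fin]
  norm_num

theorem trace_A1_mul_B1 : (A1 * B1).trace = 0 := by
  rw [A1, B1, Matrix.smul_mul, Matrix.mul_smul, Matrix.mul_fin_two, Matrix.trace_smul,
    Matrix.trace_smul, Matrix.trace_fin_two_of, smul_eq_mul, smul_eq_mul]
  linear_combination (3 / 5 * e5 ^ 2 - 2 / 5 * e5 ^ 3 + 3 / 5 * e5 ^ 4) * e5_geom_sum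

/-- The values of the character `χ₁` of `σ₁` on the conjugacy-class
representatives `1, r, r², r³, r⁴, r⁵, rs, s, s²` of the binary icosahedral group. -/
theorem sigma1_character_values :
    Matrix.trace (1 : Matrix (Fin 2) (Fin 2) ℂ) = 2 ∧
    Matrix.trace A1 = -e5 - e5^4 ∧
    Matrix.trace (A1 ^ 2) = e5^2 + e5^3 ∧
    Matrix.trace (A1 ^ 3) = -e5^2 - e5^3 ∧
    Matrix.trace (A1 ^ 4) = e5 + e5^4 ∧
    Matrix.trace (A1 ^ 5) = -2 ∧
    Matrix.trace (A1 * B1) = 0 ∧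
    Matrix.trace B1 = 1 ∧
    Matrix.trace (B1 ^ 2) = -1 := by
  refine ⟨by simp, trace_A1, ?_, ?_, ?_, ?_, trace_A1_mul_B1, trace_B1, trace_B1_sq⟩
  all_goals rw [trace_A1_pow]
  · linear_combination e5 ^ 3 * e5_pow_five
  · linear_combination -e5 ^ 2 * (e5 ^ 5 + 1) * e5_pow_five
  · linear_combination e5 * (e5 ^ 10 + e5 ^ 5 + 1) * e5_pow_five
  · linear_combination -(e5 ^ 15 + e5 ^ 10 + e5 ^ 5 + 2) * e5_pow_five

end
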